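/- Let G(x,v,t) be the kinetic Fokker–Planck fundamental solution on ℝ³×ℝ³. Then for every p ∈ [1,∞] and j ∈ ℕ₀ there is a constant C_p such that ‖|x|^j ∇_v G(·,·,t)‖_{p,1} ≤ C_p·t^{(−10p+3jp+9)/(2p)} and ‖|x|^j ∇_x G(·,·,t)‖_{p,1} ≤ C_p·t^{(−12p+3jp+9)/(2p)}, where ‖f‖_{p,q} = (∫(∫|f(x,v)|^q dv)^{p/q} dx)^{1/p}. -/

import Mathlib

open MeasureTheory Real
open scoped ENNReal

noncomputable section

local notation "E3" => EuclideanSpace ℝ (Fin 3)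

/-!
The kernel is invariant, up to a power of `s`, under the kinetic dilations
`(t, x, v) ↦ (s² t, s³ x, s v)`. Differentiating in `v` or `x` lowers its degree of homogeneity by
`1` or `3`, and the weight `|x|^j` raises it by `3 j`. Hence each mixed norm at time `t` is an exact
power of `t` times its value at time `1`, and only the finiteness of the latter remains. That holds
because the exponent is a positive definite quadratic form in `(x, v)`, so the gradients at time `1`
are dominated by a product of a function of `x` and a function of `v`, both of Gaussian decay.
-/

section MixedNorm

variable {α β F : Type*} [MeasurableSpace α] [MeasurableSpace β] [NormedAddCommGroup F]

/-- The mixed norm `‖f‖_{p,1}`, the `L^p` norm in the first variable of the `L¹` norm in the second.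
The inner norm is a Bochner integral, hence `0` at every `x` for which `f x` is not integrable. -/
def mixedNorm (f : α → β → F) (p : ℝ≥0∞) (μ : Measure α) (ν : Measure β) : ℝ≥0∞ :=
  eLpNorm (fun x => ∫ v, ‖f x v‖ ∂ν) p μ

theorem mixedNorm_const_smul [NormedSpace ℝ F] (c : ℝ) (f : α → β → F) (p : ℝ≥0∞)
    (μ : Measure α) (ν : Measure β) :
    mixedNorm (fun x v => c • f x v) p μ ν = ‖c‖ₑ * mixedNorm f p μ ν := by
  simp only [mixedNorm, norm_smul, integral_const_mul]
  rw [← enorm_norm c, ← eLpNorm_const_smul]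
  rfl

theorem mixedNorm_lt_top_of_norm_le_mul {f : α → β → F} {g : α → ℝ} {h : β → ℝ} {p : ℝ≥0∞}
    {μ : Measure α} {ν : Measure β} (hg : MemLp g p μ) (hh : Integrable h ν)
    (hf : ∀ x v, ‖f x v‖ ≤ g x * h v) : mixedNorm f p μ ν < ∞ := by
  refine (eLpNorm_mono_real fun x => ?_).trans_lt (hg.mul_const (∫ v, h v ∂ν)).eLpNorm_lt_top
  rw [norm_of_nonneg (integral_nonneg fun v => norm_nonneg _), ← integral_const_mul]
  exact integral_mono_of_nonneg (.of_forall fun v => norm_nonneg _) (hh.const_mul _)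
    (.of_forall (hf x))

end MixedNorm

section Dilation

open Module (finrank)

variable {E E' F : Type*} [NormedAddCommGroup E] [NormedSpace ℝ E] [FiniteDimensional ℝ E]
  [MeasurableSpace E] [BorelSpace E] [NormedAddCommGroup E'] [NormedSpace ℝ E']
  [FiniteDimensional ℝ E'] [MeasurableSpace E'] [BorelSpace E'] [NormedAddCommGroup F]

theorem eLpNorm_comp_smul (μ : Measure E) [μ.IsAddHaarMeasure] (f : E → F) (p : ℝ≥0∞) {r : ℝ}
    (hr : r ≠ 0) :
    eLpNorm (fun x => f (r • x)) p μ
      = ENNReal.ofReal (|r| ^ (-(finrank ℝ E / p.toReal))) * eLpNorm f p μ := by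
  have hr' : 0 < |(r ^ finrank ℝ E)⁻¹| := abs_pos.2 (inv_ne_zero (pow_ne_zero _ hr))
  have hmap := (measurableEmbedding_const_smul₀ hr).eLpNorm_map_measure (g := f) (p := p) (μ := μ)
  rw [Measure.map_addHaar_smul μ hr,
    eLpNorm_smul_measure_of_ne_zero (ENNReal.ofReal_pos.2 hr').ne',
    ENNReal.ofReal_rpow_of_pos hr', smul_eq_mul] at hmap
  refine hmap.symm.trans ?_
  rw [abs_inv, abs_pow, ← rpow_natCast, ← rpow_neg (abs_nonneg r), ← rpow_mul (abs_nonneg r),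
    one_div, ENNReal.toReal_inv, neg_mul, ← div_eq_mul_inv]

theorem mixedNorm_comp_smul (μ : Measure E) [μ.IsAddHaarMeasure] (ν : Measure E')
    [ν.IsAddHaarMeasure] (f : E → E' → F) (p : ℝ≥0∞) {a : ℝ} (ha : a ≠ 0) (b : ℝ) :
    mixedNorm (fun x v => f (a • x) (b • v)) p μ ν
      = ENNReal.ofReal (|a| ^ (-(finrank ℝ E / p.toReal)) * |(b ^ finrank ℝ E')⁻¹|)
        * mixedNorm f p μ ν := by
  have hinner (x : E) : ∫ v, ‖f (a • x) (b • v)‖ ∂ν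
      = |(b ^ finrank ℝ E')⁻¹| • ∫ v, ‖f (a • x) v‖ ∂ν :=
    Measure.integral_comp_smul ν (fun v => ‖f (a • x) v‖) b
  simp only [mixedNorm, hinner]
  rw [eLpNorm_comp_smul μ (fun x => |(b ^ finrank ℝ E')⁻¹| • ∫ v, ‖f x v‖ ∂ν) p ha,
    ENNReal.ofReal_mul (by positivity), mul_assoc, ← enorm_of_nonneg (abs_nonneg _),
    ← eLpNorm_const_smul]
  rfl

end Dilation

section Gaussian

theorem one_add_pow_le_mul_exp_sq (n : ℕ) {c y : ℝ} (hc : 0 < c) (hy : 0 ≤ y) :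
    (1 + y) ^ n ≤ n.factorial * rexp (1 + 1 / (4 * c)) * rexp (c * y ^ 2) := by
  have hlin : y ≤ 1 / (4 * c) + c * y ^ 2 := by
    have hsq : 1 / (4 * c) + c * y ^ 2 - y = (2 * c * y - 1) ^ 2 / (4 * c) := by
      field_simp
      ring
    have : 0 ≤ (2 * c * y - 1) ^ 2 / (4 * c) := by positivity
    linarith
  calc (1 + y) ^ n ≤ rexp (1 + y) * n.factorial :=
        (div_le_iff₀ (by positivity)).1 (pow_div_factorial_le_exp _ (by positivity) n)
    _ ≤ rexp (1 + (1 / (4 * c) + c * y ^ 2)) * n.factorial := by gcongr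
    _ = n.factorial * rexp (1 + 1 / (4 * c)) * rexp (c * y ^ 2) := by
        rw [← add_assoc, exp_add _ (c * y ^ 2)]
        ring

variable {E : Type*} [NormedAddCommGroup E] [InnerProductSpace ℝ E] [FiniteDimensional ℝ E]
  [MeasurableSpace E] [BorelSpace E]

theorem integrable_exp_neg_mul_norm_sq {b : ℝ} (hb : 0 < b) :
    Integrable fun x : E => rexp (-b * ‖x‖ ^ 2) := by
  have hint := (GaussianFourier.integrable_cexp_neg_mul_sq_norm_add (V := E) (b := b)
    (by simpa using hb) 0 0).norm
  simpa [Complex.norm_exp, ← Complex.ofReal_pow] using hint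

theorem memLp_exp_neg_mul_norm_sq {b : ℝ} (hb : 0 < b) (p : ℝ≥0∞) :
    MemLp (fun x : E => rexp (-b * ‖x‖ ^ 2)) p := by
  have hmeas : AEStronglyMeasurable (fun x : E => rexp (-b * ‖x‖ ^ 2)) volume :=
    Continuous.aestronglyMeasurable (by fun_prop)
  rcases eq_or_ne p 0 with rfl | hp0
  · exact memLp_zero_iff_aestronglyMeasurable.2 hmeas
  rcases eq_or_ne p ∞ with rfl | hptop
  · refine memLp_top_of_bound hmeas 1 (.of_forall fun x => ?_)
    rw [norm_of_nonneg (exp_pos _).le, exp_le_one_iff, neg_mul, neg_nonpos]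
    positivity
  · rw [← integrable_norm_rpow_iff hmeas hp0 hptop]
    have hp : 0 < p.toReal := ENNReal.toReal_pos hp0 hptop
    refine (integrable_exp_neg_mul_norm_sq (E := E) (mul_pos hb hp)).congr (.of_forall fun x => ?_)
    simp only [norm_of_nonneg (exp_pos _).le, ← exp_mul]
    congr 1
    ring

theorem memLp_one_add_norm_pow_mul_exp_neg_mul_norm_sq (n : ℕ) {b : ℝ} (hb : 0 < b) (p : ℝ≥0∞) :
    MemLp (fun x : E => (1 + ‖x‖) ^ n * rexp (-b * ‖x‖ ^ 2)) p := by
  refine (memLp_exp_neg_mul_norm_sq (half_pos hb) p).of_le_mul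
    (c := n.factorial * rexp (1 + 1 / (4 * (b / 2))))
    (Continuous.aestronglyMeasurable (by fun_prop)) (.of_forall fun x => ?_)
  rw [norm_of_nonneg (by positivity), norm_of_nonneg (by positivity)]
  calc (1 + ‖x‖) ^ n * rexp (-b * ‖x‖ ^ 2)
      ≤ n.factorial * rexp (1 + 1 / (4 * (b / 2))) * rexp (b / 2 * ‖x‖ ^ 2)
          * rexp (-b * ‖x‖ ^ 2) := by
        gcongr
        exact one_add_pow_le_mul_exp_sq n (half_pos hb) (norm_nonneg x)
    _ = n.factorial * rexp (1 + 1 / (4 * (b / 2))) * rexp (-(b / 2) * ‖x‖ ^ 2) := by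
        rw [mul_assoc, ← exp_add]
        congr 2
        ring

theorem mixedNorm_norm_pow_smul_lt_top {F : Type*} [NormedAddCommGroup F] [NormedSpace ℝ F]
    {f : E → E → F} {M b : ℝ} (hb : 0 < b)
    (hf : ∀ x v, ‖f x v‖ ≤ M * ((1 + ‖x‖) * (1 + ‖v‖)) * rexp (-b * (‖x‖ ^ 2 + ‖v‖ ^ 2)))
    (j : ℕ) (p : ℝ≥0∞) :
    mixedNorm (fun x v => ‖x‖ ^ j • f x v) p volume volume < ∞ := by
  refine mixedNorm_lt_top_of_norm_le_mul
    ((memLp_one_add_norm_pow_mul_exp_neg_mul_norm_sq (j + 1) hb p).const_mul M)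
    (memLp_one_iff_integrable.1 (memLp_one_add_norm_pow_mul_exp_neg_mul_norm_sq 1 hb 1))
    fun x v => ?_
  have hweight : ‖x‖ ^ j ≤ (1 + ‖x‖) ^ j := by gcongr; linarith
  calc ‖‖x‖ ^ j • f x v‖ = ‖x‖ ^ j * ‖f x v‖ := by rw [norm_smul, norm_pow, norm_norm]
    _ ≤ (1 + ‖x‖) ^ j
          * (M * ((1 + ‖x‖) * (1 + ‖v‖)) * rexp (-b * (‖x‖ ^ 2 + ‖v‖ ^ 2))) :=
        mul_le_mul hweight (hf x v) (norm_nonneg _) (by positivity)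
    _ = M * ((1 + ‖x‖) ^ (j + 1) * rexp (-b * ‖x‖ ^ 2))
          * ((1 + ‖v‖) ^ 1 * rexp (-b * ‖v‖ ^ 2)) := by
        rw [mul_add (-b), exp_add]
        ring

end Gaussian

section KineticHomogeneity

open Module (finrank)

variable {E F : Type*} [NormedAddCommGroup E] [NormedSpace ℝ E] [NormedAddCommGroup F]
  [NormedSpace ℝ F]

theorem fderiv_smul_of_comp_smul {f g : E → F} {a c : ℝ} (ha : a ≠ 0)
    (h : ∀ x, f (a • x) = c • g x) (x : E) :
    fderiv ℝ f (a • x) = (a⁻¹ * c) • fderiv ℝ g x := by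
  have hcomp : (f <| a • ·) = c • g := funext h
  have hderiv : a • fderiv ℝ f (a • x) = c • fderiv ℝ g x := by
    rw [← fderiv_comp_smul, hcomp, fderiv_const_smul_field]
    rfl
  rw [mul_smul, ← hderiv, inv_smul_smul₀ ha]

/-- Homogeneity of degree `m` of a function of `(t, x, v)`, `t > 0`, under the kinetic dilations
`(t, x, v) ↦ (s² t, s³ x, s v)`, which preserve `∂_t + v·∇_x - Δ_v` up to the factor `s⁻²`. -/
def IsKineticHomogeneous (f : ℝ → E → E → F) (m : ℝ) : Prop :=
  ∀ ⦃s t : ℝ⦄, 0 < s → 0 < t → ∀ x v, f (s ^ 2 * t) (s ^ 3 • x) (s • v) = s ^ m • f t x v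

namespace IsKineticHomogeneous

variable {f : ℝ → E → E → F} {m : ℝ}

theorem norm_pow_smul (hf : IsKineticHomogeneous f m) (j : ℕ) :
    IsKineticHomogeneous (fun t x v => ‖x‖ ^ j • f t x v) (m + 3 * j) := by
  intro s t hs ht x v
  have hpow : (s ^ 3) ^ j = s ^ (3 * j : ℝ) := by
    rw [← pow_mul, ← rpow_natCast]
    norm_num
  simp only [hf hs ht, norm_smul, norm_pow, norm_of_nonneg hs.le, mul_pow, hpow, smul_smul,
    rpow_add hs]
  congr 1
  ring

theorem fderiv_velocity (hf : IsKineticHomogeneous f m) :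
    IsKineticHomogeneous (fun t x v => fderiv ℝ (f t x) v) (m - 1) := by
  intro s t hs ht x v
  beta_reduce
  rw [fderiv_smul_of_comp_smul hs.ne' (hf hs ht x), rpow_sub hs, rpow_one, div_eq_inv_mul]

theorem fderiv_position (hf : IsKineticHomogeneous f m) :
    IsKineticHomogeneous (fun t x v => fderiv ℝ (fun y => f t y v) x) (m - 3) := by
  intro s t hs ht x v
  beta_reduce
  rw [fderiv_smul_of_comp_smul (pow_pos hs 3).ne' fun y => hf hs ht y v, rpow_sub hs,
    div_eq_inv_mul, ← rpow_natCast]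
  norm_num

variable [FiniteDimensional ℝ E] [MeasurableSpace E] [BorelSpace E]

theorem mixedNorm_eq_rpow_mul (hf : IsKineticHomogeneous f m) (μ ν : Measure E)
    [μ.IsAddHaarMeasure] [ν.IsAddHaarMeasure] (p : ℝ≥0∞) {t : ℝ} (ht : 0 < t) :
    mixedNorm (f t) p μ ν
      = ENNReal.ofReal (t ^ ((m + finrank ℝ E + 3 * finrank ℝ E / p.toReal) / 2))
        * mixedNorm (f 1) p μ ν := by
  obtain ⟨s, hs, rfl⟩ : ∃ s : ℝ, 0 < s ∧ t = s ^ 2 := ⟨√t, sqrt_pos.2 ht, (sq_sqrt ht.le).symm⟩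
  have hdilate : f (s ^ 2) = fun x v => s ^ m • f 1 ((s ^ 3)⁻¹ • x) (s⁻¹ • v) := by
    ext x v
    rw [← hf hs one_pos, mul_one, smul_inv_smul₀ hs.ne', smul_inv_smul₀ (pow_pos hs 3).ne']
  have hfactor : s ^ m * (|(s ^ 3)⁻¹| ^ (-(finrank ℝ E / p.toReal)) * |(s⁻¹ ^ finrank ℝ E)⁻¹|)
      = (s ^ 2) ^ ((m + finrank ℝ E + 3 * finrank ℝ E / p.toReal) / 2) := by
    rw [abs_of_pos (by positivity), abs_of_pos (by positivity), inv_pow, inv_inv,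
      ← rpow_natCast s 3, ← rpow_natCast s 2, ← rpow_natCast s (finrank ℝ E), ← rpow_neg hs.le,
      ← rpow_mul hs.le, ← rpow_mul hs.le, ← rpow_add hs, ← rpow_add hs]
    congr 1
    push_cast
    ring
  rw [hdilate, mixedNorm_const_smul,
    mixedNorm_comp_smul μ ν (f 1) p (inv_ne_zero (pow_pos hs 3).ne') s⁻¹,
    enorm_of_nonneg (by positivity), ← mul_assoc, ← ENNReal.ofReal_mul (by positivity), hfactor]

theorem exists_mixedNorm_le (hf : IsKineticHomogeneous f m) {μ ν : Measure E}
    [μ.IsAddHaarMeasure] [ν.IsAddHaarMeasure] {p : ℝ≥0∞} (hfin : mixedNorm (f 1) p μ ν < ∞) :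
    ∃ K : ℝ, ∀ t > 0, mixedNorm (f t) p μ ν
      ≤ ENNReal.ofReal (K * t ^ ((m + finrank ℝ E + 3 * finrank ℝ E / p.toReal) / 2)) := by
  refine ⟨(mixedNorm (f 1) p μ ν).toReal, fun t ht => ?_⟩
  rw [hf.mixedNorm_eq_rpow_mul μ ν p ht, ENNReal.ofReal_mul ENNReal.toReal_nonneg,
    ENNReal.ofReal_toReal hfin.ne, mul_comm]

end IsKineticHomogeneous

end KineticHomogeneity

section KolmogorovKernel

open Module (finrank)

variable {E : Type*} [NormedAddCommGroup E] [InnerProductSpace ℝ E]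

/-- The fundamental solution of the kinetic Fokker–Planck equation `∂_t G + v·∇_x G = Δ_v G` on
`E × E`, with a free normalizing constant `C`. -/
def kolmogorovKernel (C t : ℝ) (x v : E) : ℝ :=
  C * t ^ (-(2 * finrank ℝ E : ℝ)) *
    rexp (-‖v‖ ^ 2 / (4 * t) - 3 * ‖x - (t / 2) • v‖ ^ 2 / t ^ 3)

theorem isKineticHomogeneous_kolmogorovKernel (C : ℝ) :
    IsKineticHomogeneous (E := E) (kolmogorovKernel C) (-(4 * finrank ℝ E)) := by
  intro s t hs ht x v
  have hshift : s ^ 3 • x - (s ^ 2 * t / 2) • s • v = s ^ 3 • (x - (t / 2) • v) := by module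
  have hpow : (s ^ 2 * t) ^ (-(2 * finrank ℝ E : ℝ))
      = s ^ (-(4 * finrank ℝ E : ℝ)) * t ^ (-(2 * finrank ℝ E : ℝ)) := by
    rw [mul_rpow (by positivity) ht.le, ← rpow_natCast, ← rpow_mul hs.le]
    congr 2
    push_cast
    ring
  have hexponent : -‖s • v‖ ^ 2 / (4 * (s ^ 2 * t))
        - 3 * ‖s ^ 3 • (x - (t / 2) • v)‖ ^ 2 / (s ^ 2 * t) ^ 3
      = -‖v‖ ^ 2 / (4 * t) - 3 * ‖x - (t / 2) • v‖ ^ 2 / t ^ 3 := by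
    rw [norm_smul, norm_smul, norm_pow, norm_of_nonneg hs.le]
    field_simp
  rw [kolmogorovKernel, kolmogorovKernel, hshift, hpow, hexponent, smul_eq_mul]
  ring

theorem fderiv_kolmogorovKernel_velocity (C t : ℝ) (x v : E) :
    fderiv ℝ (kolmogorovKernel C t x) v
      = kolmogorovKernel C t x v • innerSL ℝ ((3 / t ^ 2) • x - (2 / t) • v) := by
  have hv := (hasFDerivAt_id (𝕜 := ℝ) v).norm_sq
  have hx := (((hasFDerivAt_id (𝕜 := ℝ) v).const_smul (t / 2)).const_sub x).norm_sq
  have hexponent : HasFDerivAt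
      (fun w : E => -‖w‖ ^ 2 / (4 * t) - 3 * ‖x - (t / 2) • w‖ ^ 2 / t ^ 3)
      (innerSL ℝ ((3 / t ^ 2) • x - (2 / t) • v)) v := by
    simp only [div_eq_mul_inv _ (4 * t), div_eq_mul_inv _ (t ^ 3)]
    refine ((hv.neg.mul_const (4 * t)⁻¹).sub
      ((hx.const_mul 3).mul_const (t ^ 3)⁻¹)).congr_fderiv ?_
    ext w
    simp only [mul_inv_rev, id_eq, ContinuousLinearMap.comp_id, smul_neg, Pi.smul_apply, map_sub,
      map_smul, ContinuousLinearMap.comp_neg, ContinuousLinearMap.comp_smulₛₗ, map_div₀,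
      ringHom_apply, sub_neg_eq_add, add_apply, neg_apply, smul_apply, coe_innerSL_apply,
      nsmul_eq_mul, Nat.cast_ofNat, smul_eq_mul, sub_apply]
    field_simp
    ring
  exact (hexponent.exp.const_mul _).fderiv.trans (smul_smul _ _ _)

theorem fderiv_kolmogorovKernel_position (C t : ℝ) (x v : E) :
    fderiv ℝ (fun y => kolmogorovKernel C t y v) x
      = kolmogorovKernel C t x v • innerSL ℝ ((3 / t ^ 2) • v - (6 / t ^ 3) • x) := by
  have hx := ((hasFDerivAt_id (𝕜 := ℝ) x).sub_const ((t / 2) • v)).norm_sq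
  have hexponent : HasFDerivAt
      (fun y : E => -‖v‖ ^ 2 / (4 * t) - 3 * ‖y - (t / 2) • v‖ ^ 2 / t ^ 3)
      (innerSL ℝ ((3 / t ^ 2) • v - (6 / t ^ 3) • x)) x := by
    simp only [div_eq_mul_inv _ (t ^ 3)]
    refine (((hx.const_mul 3).mul_const (t ^ 3)⁻¹).const_sub _).congr_fderiv ?_
    ext w
    simp only [id_eq, map_sub, map_smul, ContinuousLinearMap.comp_id, neg_apply, smul_apply,
      sub_apply, coe_innerSL_apply, smul_eq_mul, nsmul_eq_mul, Nat.cast_ofNat]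
    field_simp
    ring
  exact (hexponent.exp.const_mul _).fderiv.trans (smul_smul _ _ _)

theorem norm_sq_add_norm_sq_le_kolmogorov_exponent (x v : E) :
    (‖x‖ ^ 2 + ‖v‖ ^ 2) / 6 ≤ ‖v‖ ^ 2 / 4 + 3 * ‖x - (1 / 2 : ℝ) • v‖ ^ 2 := by
  have hexpand : ‖x - (1 / 2 : ℝ) • v‖ ^ 2 = ‖x‖ ^ 2 - inner ℝ x v + ‖v‖ ^ 2 / 4 := by
    rw [norm_sub_sq_real, inner_smul_right, norm_smul, norm_of_nonneg (by norm_num)]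
    ring
  nlinarith [real_inner_le_norm x v, sq_nonneg (17 * ‖x‖ - 9 * ‖v‖)]

theorem abs_kolmogorovKernel_one_le (C : ℝ) (x v : E) :
    |kolmogorovKernel C 1 x v| ≤ |C| * rexp (-(1 / 6) * (‖x‖ ^ 2 + ‖v‖ ^ 2)) := by
  rw [kolmogorovKernel, one_rpow, mul_one, abs_mul, abs_exp]
  gcongr
  linarith [norm_sq_add_norm_sq_le_kolmogorov_exponent x v]

theorem norm_kolmogorovKernel_one_smul_innerSL_le (C : ℝ) {x v w : E}
    (hw : ‖w‖ ≤ 6 * ‖x‖ + 3 * ‖v‖) :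
    ‖kolmogorovKernel C 1 x v • innerSL ℝ w‖
      ≤ 6 * |C| * ((1 + ‖x‖) * (1 + ‖v‖)) * rexp (-(1 / 6) * (‖x‖ ^ 2 + ‖v‖ ^ 2)) := by
  have hw' : ‖w‖ ≤ 6 * ((1 + ‖x‖) * (1 + ‖v‖)) := by
    nlinarith [mul_nonneg (norm_nonneg x) (norm_nonneg v), norm_nonneg v]
  rw [norm_smul, innerSL_apply_norm, norm_eq_abs]
  refine (mul_le_mul (abs_kolmogorovKernel_one_le C x v) hw' (norm_nonneg w)
    (by positivity)).trans_eq ?_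
  ring

theorem norm_fderiv_kolmogorovKernel_velocity_one_le (C : ℝ) (x v : E) :
    ‖fderiv ℝ (kolmogorovKernel C 1 x) v‖
      ≤ 6 * |C| * ((1 + ‖x‖) * (1 + ‖v‖)) * rexp (-(1 / 6) * (‖x‖ ^ 2 + ‖v‖ ^ 2)) := by
  rw [fderiv_kolmogorovKernel_velocity]
  have hnorm : ‖(3 / 1 ^ 2 : ℝ) • x - (2 / 1 : ℝ) • v‖ ≤ 3 * ‖x‖ + 2 * ‖v‖ := by
    simpa [norm_smul] using norm_sub_le ((3 : ℝ) • x) ((2 : ℝ) • v)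
  exact norm_kolmogorovKernel_one_smul_innerSL_le C
    (by linarith [norm_nonneg x, norm_nonneg v])

theorem norm_fderiv_kolmogorovKernel_position_one_le (C : ℝ) (x v : E) :
    ‖fderiv ℝ (fun y => kolmogorovKernel C 1 y v) x‖
      ≤ 6 * |C| * ((1 + ‖x‖) * (1 + ‖v‖)) * rexp (-(1 / 6) * (‖x‖ ^ 2 + ‖v‖ ^ 2)) := by
  rw [fderiv_kolmogorovKernel_position]
  have hnorm : ‖(3 / 1 ^ 2 : ℝ) • v - (6 / 1 ^ 3 : ℝ) • x‖ ≤ 3 * ‖v‖ + 6 * ‖x‖ := by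
    simpa [norm_smul] using norm_sub_le ((3 : ℝ) • v) ((6 : ℝ) • x)
  exact norm_kolmogorovKernel_one_smul_innerSL_le C (by linarith)

-- At `p = ∞` the left-hand side relies on `∞.toReal = 0` and `c / 0 = 0`.
theorem add_div_toReal_div_two_eq_ite {p : ℝ≥0∞} (hp : p ≠ 0) (a b c : ℝ) :
    (b - a + c / p.toReal) / 2
      = if p = ∞ then (b - a) / 2 else (-a * p.toReal + b * p.toReal + c) / (2 * p.toReal) := by
  split_ifs with htop
  · simp [htop]
  · have := ENNReal.toReal_pos hp htop
    field_simp
    ring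

variable [FiniteDimensional ℝ E] [MeasurableSpace E] [BorelSpace E]

theorem kolmogorov_kernel_gradient_mixed_norms_general (C : ℝ) {p : ℝ≥0∞} (hp : p ≠ 0) (j : ℕ) :
    ∃ Cp > 0, ∀ t > 0,
      mixedNorm (fun x v : E => ‖x‖ ^ j • fderiv ℝ (fun w => kolmogorovKernel C t x w) v)
          p volume volume
        ≤ ENNReal.ofReal (Cp * t ^ (if p = ∞ then (3 * j - (3 * finrank ℝ E + 1)) / 2
            else (-(3 * finrank ℝ E + 1) * p.toReal + 3 * j * p.toReal + 3 * finrank ℝ E)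
              / (2 * p.toReal) : ℝ)) ∧
      mixedNorm (fun x v : E => ‖x‖ ^ j • fderiv ℝ (fun y => kolmogorovKernel C t y v) x)
          p volume volume
        ≤ ENNReal.ofReal (Cp * t ^ (if p = ∞ then (3 * j - (3 * finrank ℝ E + 3)) / 2
            else (-(3 * finrank ℝ E + 3) * p.toReal + 3 * j * p.toReal + 3 * finrank ℝ E)
              / (2 * p.toReal) : ℝ)) := by
  have hhom := isKineticHomogeneous_kolmogorovKernel (E := E) C
  obtain ⟨K, hK⟩ := (hhom.fderiv_velocity.norm_pow_smul j).exists_mixedNorm_le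
    (mixedNorm_norm_pow_smul_lt_top (by norm_num)
      (norm_fderiv_kolmogorovKernel_velocity_one_le C) j p)
  obtain ⟨L, hL⟩ := (hhom.fderiv_position.norm_pow_smul j).exists_mixedNorm_le
    (mixedNorm_norm_pow_smul_lt_top (by norm_num)
      (norm_fderiv_kolmogorovKernel_position_one_le C) j p)
  have hdegree (n : ℝ) : -(4 * finrank ℝ E) - n + 3 * j + finrank ℝ E
      = 3 * j - (3 * finrank ℝ E + n) := by ring
  simp only [hdegree, add_div_toReal_div_two_eq_ite hp] at hK hL
  refine ⟨max 1 (max K L), by positivity, fun t ht => ⟨(hK t ht).trans ?_, (hL t ht).trans ?_⟩⟩ <;>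
  · gcongr
    simp

end KolmogorovKernel

/-- mixed `(p,1)`-norm bounds for `|x|^j ∇_v G` and `|x|^j ∇_x G`,
where `G` is the kinetic Fokker–Planck fundamental solution and the `(p,1)` norm is
the `L¹` norm in `v` followed by the `L^p` norm in `x`. -/
theorem kolmogorov_kernel_gradient_mixed_norms (C : ℝ) (hC : 0 < C)
    (G : E3 → E3 → ℝ → ℝ)
    (hG : ∀ (x v : E3) (t : ℝ), 0 < t →
      G x v t = C * t ^ (-(6 : ℝ)) *
        Real.exp (-‖v‖ ^ 2 / (4 * t) - 3 * ‖x - (t / 2) • v‖ ^ 2 / t ^ 3)) :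
    ∀ (p : ℝ≥0∞), 1 ≤ p → ∀ j : ℕ, ∃ Cp > 0, ∀ t ∈ Set.Ioc (0 : ℝ) 1,
      (eLpNorm (fun x : E3 => ∫ v : E3, ‖x‖ ^ j * ‖fderiv ℝ (fun w => G x w t) v‖) p volume
        ≤ ENNReal.ofReal (Cp * t ^ (if p = ⊤ then (3 * (j : ℝ) - 10) / 2
            else (-10 * p.toReal + 3 * (j : ℝ) * p.toReal + 9) / (2 * p.toReal)))) ∧
      (eLpNorm (fun x : E3 => ∫ v : E3, ‖x‖ ^ j * ‖fderiv ℝ (fun y => G y v t) x‖) p volume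
        ≤ ENNReal.ofReal (Cp * t ^ (if p = ⊤ then (3 * (j : ℝ) - 12) / 2
            else (-12 * p.toReal + 3 * (j : ℝ) * p.toReal + 9) / (2 * p.toReal)))) := by
  intro p hp j
  obtain ⟨Cp, hCp, hbound⟩ :=
    kolmogorov_kernel_gradient_mixed_norms_general (E := E3) C (zero_lt_one.trans_le hp).ne' j
  refine ⟨Cp, hCp, fun t ht => ?_⟩
  have hkernel (x v : E3) : kolmogorovKernel C t x v = G x v t := by
    norm_num [kolmogorovKernel, hG x v t ht.1]
  simpa only [mixedNorm, hkernel, norm_smul, norm_pow, norm_norm, finrank_euclideanSpace_fin,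
    Nat.cast_ofNat, show (3 * 3 : ℝ) = 9 by norm_num, show (9 + 1 : ℝ) = 10 by norm_num,
    show (9 + 3 : ℝ) = 12 by norm_num] using hbound t ht.1
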